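/- Let F_θ(x) = e^{γθ}·x^{θ-1}·Γ(θ)·p_θ(1/x) for x ∈ (0,1] be the distribution function of the limiting longest-cycle fraction L^{(∞)}, where γ is the Euler–Mascheroni constant. Then C_δ := θ·∫_δ^1 (1−x)^{θ-1}·P(L^{(∞)} ≤ x/(1−x))·dx/x equals 1 − Γ(θ)e^{γθ}·δ^{θ-1}·p_θ(1/δ), for 0 < δ < 1. -/

import Mathlib

open MeasureTheory ProbabilityTheory Filter Set

/-!
The generating function `G` of `T_{0n}` satisfies `(1 - z) G' = θ (1 - z ^ n) G`, so that the
point probabilities obey `(k + 1) q_{k+1} = (k + θ) q_k - θ q_{k-n}`. With the integrating factor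
`b_k = B(θ, k + 1)` this is solved by
`b_m (θ + m) q_m = q_0 - θ ∑_{j < m - n} b_{n+j} q_j`.
After multiplication by `n ^ θ` every term has a limit at `m = ⌊n y⌋`, because `n ^ θ b_n → Γ(θ)`
and `n ^ θ q_0 → e ^ (-γ θ)`, and the sum is a Riemann sum to which dominated convergence applies:
`Γ(θ) y ^ (1 - θ) p(y) = e ^ (-γ θ) - θ Γ(θ) ∫_0^{y-1} (1 + u) ^ (-θ) p(u) du`.
The substitution `x = 1 / (1 + u)` turns this into the integral equation for `F_θ`.
-/

open scoped Topology

section PowerSeries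

theorem hasFPowerSeriesAt_ofScalars_iff {𝕜 : Type*} [NontriviallyNormedField 𝕜] {c : ℕ → 𝕜}
    {f : 𝕜 → 𝕜} :
    HasFPowerSeriesAt f (FormalMultilinearSeries.ofScalars 𝕜 c) 0 ↔
      ∀ᶠ z in 𝓝 0, HasSum (fun k => z ^ k * c k) (f z) := by
  simp [hasFPowerSeriesAt_iff]

theorem hasSum_deriv_of_hasSum_pow_mul {𝕜 : Type*} [NontriviallyNormedField 𝕜] [CompleteSpace 𝕜]
    {c : ℕ → 𝕜} {f : 𝕜 → 𝕜} (h : ∀ᶠ z in 𝓝 0, HasSum (fun k => z ^ k * c k) (f z)) :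
    ∀ᶠ z in 𝓝 0, HasSum (fun k : ℕ => z ^ k * ((k + 1) * c (k + 1))) (deriv f z) := by
  obtain ⟨r, hr⟩ := hasFPowerSeriesAt_ofScalars_iff.2 h
  have hderiv := (ContinuousLinearMap.apply 𝕜 𝕜 (1 : 𝕜)).comp_hasFPowerSeriesOnBall hr.fderiv
  filter_upwards [hasFPowerSeriesAt_iff.1 hderiv.hasFPowerSeriesAt] with z hz
  have hcoeff (k : ℕ) : ((ContinuousLinearMap.apply 𝕜 𝕜 (1 : 𝕜)).compFormalMultilinearSeries
      (FormalMultilinearSeries.ofScalars 𝕜 c).derivSeries).coeff k = (k + 1) * c (k + 1) := by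
    change (FormalMultilinearSeries.ofScalars 𝕜 c).derivSeries.coeff k 1 = _
    rw [FormalMultilinearSeries.derivSeries_coeff_one]
    simp
  simpa [hcoeff] using hz

theorem eq_zero_of_hasSum_pow_mul_zero {𝕜 : Type*} [NontriviallyNormedField 𝕜] {c : ℕ → 𝕜}
    (h : ∀ᶠ z in 𝓝 0, HasSum (fun k => z ^ k * c k) 0) : c = 0 :=
  (FormalMultilinearSeries.ofScalars_series_eq_zero (E := 𝕜)).1
    (hasFPowerSeriesAt_ofScalars_iff (f := 0).2 h).eq_zero

theorem hasSum_pow_mul_nhds_zero_of_nhdsGT {c : ℕ → ℝ} {f : ℝ → ℝ} (hf : AnalyticAt ℝ f 0)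
    (h : ∀ᶠ z in 𝓝[>] 0, HasSum (fun k => z ^ k * c k) (f z)) :
    ∀ᶠ z in 𝓝 0, HasSum (fun k => z ^ k * c k) (f z) := by
  obtain ⟨r, hsum, hr⟩ := (h.and self_mem_nhdsWithin).exists
  lift r to NNReal using le_of_lt hr
  have hradius : 0 < (FormalMultilinearSeries.ofScalars ℝ c).radius := by
    refine lt_of_lt_of_le (by simpa using hr)
      (FormalMultilinearSeries.le_radius_of_summable_norm _ (r := r) ?_)
    simpa [mul_comm] using hsum.summable.norm
  have hseries := ((FormalMultilinearSeries.ofScalars ℝ c).hasFPowerSeriesOnBall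
    hradius).hasFPowerSeriesAt
  have heq : ∀ᶠ z in 𝓝[>] (0 : ℝ), (FormalMultilinearSeries.ofScalars ℝ c).sum z = f z := by
    filter_upwards [h, (hasFPowerSeriesAt_ofScalars_iff.1 hseries).filter_mono nhdsWithin_le_nhds]
      with z hz hz' using hz'.unique hz
  exact hasFPowerSeriesAt_ofScalars_iff.1 <| hseries.congr <|
    (hseries.analyticAt.frequently_eq_iff_eventually_eq hf).1 <|
      heq.frequently.filter_mono (nhdsWithin_mono _ fun _ hz => ne_of_gt hz)

theorem hasSum_pow_mul_shift {R : Type*} [CommRing R] [TopologicalSpace R] [IsTopologicalRing R]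
    {c : ℕ → R} {z s : R} (h : HasSum (fun k => z ^ k * c k) s) (n : ℕ) :
    HasSum (fun k => z ^ k * (if n ≤ k then c (k - n) else 0)) (z ^ n * s) := by
  rw [← hasSum_nat_add_iff' n, Finset.sum_eq_zero, sub_zero]
  · simpa [pow_add, mul_assoc, mul_comm, mul_left_comm] using h.mul_left (z ^ n)
  · intro k hk
    simp [Finset.mem_range.1 hk]

end PowerSeries

section RiemannSum

theorem tendsto_natFloor_natCast_mul_div {u : ℝ} (hu : 0 ≤ u) :
    Tendsto (fun n : ℕ => (⌊n * u⌋₊ : ℝ) / n) atTop (𝓝 u) := by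
  simpa only [mul_comm u] using!
    (tendsto_nat_floor_mul_div_atTop hu).comp tendsto_natCast_atTop_atTop

variable {E : Type*} [NormedAddCommGroup E] [NormedSpace ℝ E]

theorem integral_comp_natFloor [CompleteSpace E] (g : ℕ → E) (N : ℕ) :
    ∫ t in (0 : ℝ)..N, g ⌊t⌋₊ = ∑ j ∈ Finset.range N, g j := by
  have hconst (j : ℕ) : EqOn (fun t : ℝ => g ⌊t⌋₊) (fun _ => g j) (Ioo j (j + 1 : ℕ)) := by
    intro t ht
    have hfloor : ⌊t⌋₊ = j :=
      (Nat.floor_eq_iff (j.cast_nonneg.trans ht.1.le)).2 ⟨ht.1.le, by exact_mod_cast ht.2⟩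
    simp only [hfloor]
  have hle (j : ℕ) : (j : ℝ) ≤ (j + 1 : ℕ) := by exact_mod_cast j.le_succ
  have hint (j : ℕ) (_ : j < N) :
      IntervalIntegrable (fun t : ℝ => g ⌊t⌋₊) volume j (j + 1 : ℕ) := by
    rw [intervalIntegrable_iff_integrableOn_Ioo_of_le (hle j),
      integrableOn_congr_fun (hconst j) measurableSet_Ioo]
    exact integrableOn_const (by simp)
  rw [← Nat.cast_zero, ← intervalIntegral.sum_integral_adjacent_intervals hint]
  refine Finset.sum_congr rfl fun j _ => ?_
  rw [intervalIntegral.integral_of_le (hle j), integral_Ioc_eq_integral_Ioo,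
    setIntegral_congr_fun measurableSet_Ioo (hconst j)]
  simp

theorem integral_smul_comp_natFloor_mul [CompleteSpace E] (g : ℕ → E) {r : ℝ} (hr : r ≠ 0) (N : ℕ) :
    ∫ u in 0..N / r, r • g ⌊r * u⌋₊ = ∑ j ∈ Finset.range N, g j := by
  rw [intervalIntegral.integral_smul,
    intervalIntegral.smul_integral_comp_mul_left (f := fun t : ℝ => g ⌊t⌋₊), mul_zero,
    mul_div_cancel₀ _ hr, integral_comp_natFloor]

theorem tendsto_sum_range_floor_of_dominated [CompleteSpace E] {a : ℕ → ℕ → E} {f : ℝ → E}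
    {bound : ℝ → ℝ} {w : ℝ} (hw : 0 ≤ w) (hbound_int : IntervalIntegrable bound volume 0 w)
    (hbound : ∀ᶠ n : ℕ in atTop, ∀ u ∈ Ioc 0 w, ‖(n : ℝ) • a n ⌊n * u⌋₊‖ ≤ bound u)
    (hlim : ∀ u ∈ Ioo 0 w, Tendsto (fun n : ℕ => (n : ℝ) • a n ⌊n * u⌋₊) atTop (𝓝 (f u))) :
    Tendsto (fun n : ℕ => ∑ j ∈ Finset.range ⌊n * w⌋₊, a n j) atTop (𝓝 (∫ u in 0..w, f u)) := by
  -- `c n ≤ w` is the end of the last complete cell of the mesh `1 / n`.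
  set c : ℕ → ℝ := fun n => (⌊n * w⌋₊ : ℝ) / n
  set F : ℕ → ℝ → E := fun n => indicator (Iic (c n)) fun u => (n : ℝ) • a n ⌊n * u⌋₊
  have hc : Tendsto c atTop (𝓝 w) := tendsto_natFloor_natCast_mul_div hw
  have hF (n : ℕ) (hn : 0 < n) :
      ∫ u in 0..w, F n u = ∑ j ∈ Finset.range ⌊n * w⌋₊, a n j := by
    have hn' : (0 : ℝ) < n := Nat.cast_pos.2 hn
    have hcw : c n ∈ Icc 0 w :=
      ⟨by positivity, (div_le_iff₀' hn').2 (Nat.floor_le (by positivity))⟩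
    exact (intervalIntegral.integral_indicator hcw).trans
      (integral_smul_comp_natFloor_mul (a n) hn'.ne' _)
  refine Tendsto.congr' ((eventually_gt_atTop 0).mono hF) ?_
  refine intervalIntegral.tendsto_integral_filter_of_dominated_convergence bound
    (Eventually.of_forall fun n => ?_) ?_ hbound_int ?_
  · have hmeas : StronglyMeasurable fun u : ℝ => a n ⌊n * u⌋₊ :=
      (StronglyMeasurable.of_discrete (f := a n)).comp_measurable
        (measurable_const.mul measurable_id).nat_floor
    exact ((hmeas.const_smul (n : ℝ)).indicator measurableSet_Iic).aestronglyMeasurable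
  · filter_upwards [hbound] with n hn
    refine Eventually.of_forall fun u hu => ?_
    rw [uIoc_of_le hw] at hu
    exact (norm_indicator_le_norm_self _ _).trans (hn u hu)
  · filter_upwards [compl_mem_ae_iff.2 (measure_singleton w)] with u huw hu
    rw [uIoc_of_le hw] at hu
    have huw' : u < w := lt_of_le_of_ne hu.2 huw
    refine (hlim u ⟨hu.1, huw'⟩).congr' ?_
    filter_upwards [hc.eventually_const_lt huw'] with n hn
    exact (indicator_of_mem (s := Iic (c n)) hn.le fun u => (n : ℝ) • a n ⌊n * u⌋₊).symm

end RiemannSum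

section BetaSeq

/-- The beta-function values `B(θ, k + 1) = k! / (θ (θ + 1) ⋯ (θ + k))`. They form an integrating
factor for the recurrence `IsEwensSumLaw.recurrence`, and `k ^ θ * B(θ, k + 1)` is Euler's
approximation of `Γ(θ)`. -/
noncomputable def betaSeq (θ : ℝ) (k : ℕ) : ℝ :=
  k.factorial / ∏ j ∈ Finset.range (k + 1), (θ + j)

variable {θ : ℝ}

theorem betaSeq_pos (hθ : 0 < θ) (k : ℕ) : 0 < betaSeq θ k :=
  div_pos (Nat.cast_pos.2 k.factorial_pos) (Finset.prod_pos fun j _ => by positivity)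

theorem betaSeq_zero_mul (hθ : θ ≠ 0) : betaSeq θ 0 * (θ + (0 : ℕ)) = 1 := by
  simp [betaSeq, hθ]

theorem betaSeq_succ_mul {k : ℕ} (hk : θ + (k + 1 : ℕ) ≠ 0) :
    betaSeq θ (k + 1) * (θ + (k + 1 : ℕ)) = betaSeq θ k * (k + 1) := by
  rw [betaSeq, betaSeq, Finset.prod_range_succ _ (k + 1), ← div_div, div_mul_cancel₀ _ hk,
    Nat.factorial_succ]
  push_cast
  ring

theorem betaSeq_antitone (hθ : 0 < θ) : Antitone (betaSeq θ) := by
  refine antitone_nat_of_succ_le fun k => ?_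
  have hlast : 0 < θ + (k + 1 : ℕ) := by positivity
  refine le_of_mul_le_mul_right ?_ hlast
  rw [betaSeq_succ_mul hlast.ne']
  refine mul_le_mul_of_nonneg_left ?_ (betaSeq_pos hθ k).le
  push_cast
  exact le_add_of_nonneg_left hθ.le

theorem rpow_mul_betaSeq (θ : ℝ) (k : ℕ) : (k : ℝ) ^ θ * betaSeq θ k = Real.GammaSeq θ k :=
  (mul_div_assoc _ _ _).symm

theorem tendsto_rpow_mul_betaSeq (θ : ℝ) {y : ℝ} (hy : 0 < y) {r : ℕ → ℕ}
    (hr : Tendsto (fun n : ℕ => (r n : ℝ) / n) atTop (𝓝 y)) :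
    Tendsto (fun n : ℕ => (n : ℝ) ^ θ * betaSeq θ (r n)) atTop (𝓝 (Real.Gamma θ * y ^ (-θ))) := by
  have hr_atTop : Tendsto (fun n => (r n : ℝ)) atTop atTop := by
    refine (hr.pos_mul_atTop hy tendsto_natCast_atTop_atTop).congr' ?_
    filter_upwards [eventually_gt_atTop 0] with n hn
    field_simp
  have hgamma := (Real.GammaSeq_tendsto_Gamma θ).comp (tendsto_natCast_atTop_iff.1 hr_atTop)
  refine (hgamma.mul (hr.rpow_const (p := -θ) (Or.inl hy.ne'))).congr' ?_
  filter_upwards [eventually_gt_atTop 0, hr_atTop.eventually_gt_atTop 0] with n hn hrn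
  have hn' : (0 : ℝ) < n := Nat.cast_pos.2 hn
  rw [Function.comp_apply, ← rpow_mul_betaSeq, Real.div_rpow hrn.le hn'.le, Real.rpow_neg hrn.le,
    Real.rpow_neg hn'.le]
  field_simp

theorem tendsto_betaSeq_mul_rpow (θ : ℝ) :
    Tendsto (fun k : ℕ => betaSeq θ k * (θ + k) * ((k : ℝ) + 1) ^ (θ - 1)) atTop
      (𝓝 (Real.Gamma θ)) := by
  have hpred : Tendsto (fun n : ℕ => ((n - 1 : ℕ) : ℝ) / n) atTop (𝓝 1) := by
    refine (tendsto_add_atTop_iff_nat 1).1 ?_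
    simpa using! tendsto_natCast_div_add_atTop (1 : ℝ)
  have hratio : Tendsto (fun k : ℕ => (θ + k) / ((k : ℝ) + 1)) atTop (𝓝 1) := by
    simpa [add_comm] using! tendsto_add_mul_div_add_mul_atTop_nhds θ 1 1 (one_ne_zero (α := ℝ))
  have hbeta := (tendsto_add_atTop_iff_nat 1).2 (tendsto_rpow_mul_betaSeq θ one_pos hpred)
  rw [Real.one_rpow, mul_one] at hbeta
  refine (by simpa using hbeta.mul hratio : Tendsto _ _ (𝓝 (Real.Gamma θ))).congr fun k => ?_
  have hk : (0 : ℝ) < k + 1 := by positivity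
  rw [Real.rpow_sub_one hk.ne']
  ring

theorem exists_inv_betaSeq_mul_le (hθ : 0 < θ) :
    ∃ C, 0 ≤ C ∧ ∀ k : ℕ, (betaSeq θ k * (θ + k))⁻¹ ≤ C * ((k : ℝ) + 1) ^ (θ - 1) := by
  obtain ⟨C, hC⟩ :=
    ((tendsto_betaSeq_mul_rpow θ).inv₀ (Real.Gamma_pos_of_pos hθ).ne').bddAbove_range
  have hC_le (k : ℕ) : (betaSeq θ k * (θ + k) * ((k : ℝ) + 1) ^ (θ - 1))⁻¹ ≤ C := hC ⟨k, rfl⟩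
  have hfactor (k : ℕ) : 0 < betaSeq θ k * (θ + k) := mul_pos (betaSeq_pos hθ k) (by positivity)
  have hpow (k : ℕ) : 0 < ((k : ℝ) + 1) ^ (θ - 1) := by positivity
  refine ⟨C, (inv_nonneg.2 (mul_pos (hfactor 0) (hpow 0)).le).trans (hC_le 0), fun k => ?_⟩
  calc (betaSeq θ k * (θ + k))⁻¹
      = (betaSeq θ k * (θ + k) * ((k : ℝ) + 1) ^ (θ - 1))⁻¹ * ((k : ℝ) + 1) ^ (θ - 1) := by
        rw [mul_inv (betaSeq θ k * _), inv_mul_cancel_right₀ (hpow k).ne']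
    _ ≤ C * ((k : ℝ) + 1) ^ (θ - 1) := mul_le_mul_of_nonneg_right (hC_le k) (hpow k).le

end BetaSeq

section Law

/-- The probability generating function of `T_{0n} = ∑_{j ≤ n} j Z_j`, where the `Z_j` are
independent Poisson variables of means `θ / j`. -/
noncomputable def ewensSumPGF (θ : ℝ) (n : ℕ) (z : ℝ) : ℝ :=
  ∏ j ∈ Finset.Icc 1 n, Real.exp ((θ / j) * (z ^ j - 1))

theorem ewensSumPGF_eq_exp (θ : ℝ) (n : ℕ) :
    ewensSumPGF θ n = fun z => Real.exp (∑ j ∈ Finset.Icc 1 n, (θ / j) * (z ^ j - 1)) :=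
  funext fun _ => (Real.exp_sum _ _).symm

theorem ewensSumPGF_pos (θ : ℝ) (n : ℕ) (z : ℝ) : 0 < ewensSumPGF θ n z :=
  Finset.prod_pos fun _ _ => Real.exp_pos _

theorem analyticAt_ewensSumPGF (θ : ℝ) (n : ℕ) (z : ℝ) : AnalyticAt ℝ (ewensSumPGF θ n) z := by
  rw [ewensSumPGF_eq_exp]
  fun_prop

theorem ewensSumPGF_zero (θ : ℝ) (n : ℕ) : ewensSumPGF θ n 0 = Real.exp (-(θ * harmonic n)) := by
  rw [ewensSumPGF_eq_exp, harmonic_eq_sum_Icc]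
  push_cast
  rw [Finset.mul_sum, ← Finset.sum_neg_distrib]
  congr 1
  refine Finset.sum_congr rfl fun j hj => ?_
  rw [zero_pow (Nat.one_le_iff_ne_zero.1 (Finset.mem_Icc.1 hj).1)]
  ring

theorem one_sub_mul_deriv_ewensSumPGF (θ : ℝ) (n : ℕ) (z : ℝ) :
    (1 - z) * deriv (ewensSumPGF θ n) z = θ * (1 - z ^ n) * ewensSumPGF θ n z := by
  have hexponent (j : ℕ) (hj : j ∈ Finset.Icc 1 n) :
      HasDerivAt (fun z : ℝ => (θ / j) * (z ^ j - 1)) (θ * z ^ (j - 1)) z := by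
    have hj0 : (j : ℝ) ≠ 0 := Nat.cast_ne_zero.2 (Nat.one_le_iff_ne_zero.1 (Finset.mem_Icc.1 hj).1)
    convert! ((hasDerivAt_pow j z).sub_const 1).const_mul (θ / j) using 1
    field_simp
  have hderiv : deriv (ewensSumPGF θ n) z =
      ewensSumPGF θ n z * ∑ j ∈ Finset.Icc 1 n, θ * z ^ (j - 1) := by
    rw [ewensSumPGF_eq_exp]
    exact (HasDerivAt.fun_sum hexponent).exp.deriv
  have hgeom : (1 - z) * ∑ j ∈ Finset.Icc 1 n, θ * z ^ (j - 1) = θ * (1 - z ^ n) := by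
    have hindex : ∑ j ∈ Finset.Icc 1 n, z ^ (j - 1) = ∑ i ∈ Finset.range n, z ^ i := by
      rw [Finset.range_eq_Ico, Finset.sum_Ico_eq_sum_range, ← Finset.Ico_succ_right_eq_Icc,
        Finset.sum_Ico_eq_sum_range]
      simp
    rw [← Finset.mul_sum, hindex, mul_left_comm, mul_neg_geom_sum]
  rw [hderiv, mul_left_comm, hgeom, mul_comm]

/-- `q` is the sequence of point probabilities of `T_{0n}`, encoded by its generating function.
Total mass `1` is the case `z = 1` of `hasSum_pgf`. -/
structure IsEwensSumLaw (θ : ℝ) (n : ℕ) (q : ℕ → ℝ) : Prop where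
  nonneg : ∀ k, 0 ≤ q k
  hasSum_pgf : ∀ z ∈ Ioc (0 : ℝ) 1, HasSum (fun k => z ^ k * q k) (ewensSumPGF θ n z)

namespace IsEwensSumLaw

variable {θ : ℝ} {n : ℕ} {q : ℕ → ℝ}

theorem of_measure {μ : Measure ℕ}
    (h : ∀ z ∈ Ioc (0 : ℝ) 1, ∑' k : ℕ, z ^ k * (μ {k}).toReal = ewensSumPGF θ n z) :
    IsEwensSumLaw θ n fun k => (μ {k}).toReal where
  nonneg _ := ENNReal.toReal_nonneg
  hasSum_pgf z hz := by
    have hsummable : Summable fun k : ℕ => z ^ k * (μ {k}).toReal := by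
      by_contra hnot
      have hzero := h z hz
      rw [tsum_eq_zero_of_not_summable hnot] at hzero
      exact (ewensSumPGF_pos θ n z).ne hzero
    exact h z hz ▸ hsummable.hasSum

theorem hasSum_pgf_nhds_zero (h : IsEwensSumLaw θ n q) :
    ∀ᶠ z in 𝓝 0, HasSum (fun k => z ^ k * q k) (ewensSumPGF θ n z) := by
  refine hasSum_pow_mul_nhds_zero_of_nhdsGT (analyticAt_ewensSumPGF θ n 0) ?_
  filter_upwards [Ioc_mem_nhdsGT (zero_lt_one' ℝ)] using h.hasSum_pgf

theorem apply_zero (h : IsEwensSumLaw θ n q) : q 0 = Real.exp (-(θ * harmonic n)) := by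
  have hconst : HasSum (fun k => (0 : ℝ) ^ k * q k) (q 0) := by
    simpa using hasSum_single (f := fun k => (0 : ℝ) ^ k * q k) 0
      fun k hk => by rw [zero_pow hk, zero_mul]
  rw [← ewensSumPGF_zero]
  exact hconst.unique h.hasSum_pgf_nhds_zero.self_of_nhds

theorem recurrence (h : IsEwensSumLaw θ n q) (k : ℕ) :
    (k + 1) * q (k + 1) = (k + θ) * q k - θ * (if n ≤ k then q (k - n) else 0) := by
  suffices hcoeff : (fun k : ℕ => (k + 1) * q (k + 1) - k * q k - θ * q k +
      θ * (if n ≤ k then q (k - n) else 0)) = 0 by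
    have hk := congrFun hcoeff k
    rw [Pi.zero_apply] at hk
    linear_combination hk
  refine eq_zero_of_hasSum_pow_mul_zero (𝕜 := ℝ) ?_
  filter_upwards [h.hasSum_pgf_nhds_zero, hasSum_deriv_of_hasSum_pow_mul h.hasSum_pgf_nhds_zero]
    with z hpgf hderiv
  have hmul_deriv : HasSum (fun k : ℕ => z ^ k * (k * q k)) (z * deriv (ewensSumPGF θ n) z) := by
    convert! hasSum_pow_mul_shift hderiv 1 using 1
    · ext (_ | k) <;> simp
    · rw [pow_one]
  have hode := one_sub_mul_deriv_ewensSumPGF θ n z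
  convert! ((hderiv.sub hmul_deriv).sub (hpgf.mul_left θ)).add
    ((hasSum_pow_mul_shift hpgf n).mul_left θ) using 1
  · ext k
    ring
  · linear_combination -hode

theorem betaSeq_mul_apply_eq (h : IsEwensSumLaw θ n q) (hθ : 0 < θ) (m : ℕ) :
    betaSeq θ m * (θ + m) * q m =
      q 0 - θ * ∑ j ∈ Finset.range (m - n), betaSeq θ (n + j) * q j := by
  induction m with
  | zero => simp only [betaSeq_zero_mul hθ.ne', Nat.zero_sub, Finset.sum_range_zero]; ring
  | succ m ih =>
    have hrec := h.recurrence m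
    rw [betaSeq_succ_mul (k := m) (by positivity)]
    by_cases hnm : n ≤ m
    · rw [if_pos hnm] at hrec
      rw [Nat.succ_sub hnm, Finset.sum_range_succ, Nat.add_sub_cancel' hnm]
      linear_combination betaSeq θ m * hrec + ih
    · rw [if_neg hnm] at hrec
      rw [Nat.sub_eq_zero_of_le (by omega)] at ih ⊢
      linear_combination betaSeq θ m * hrec + ih

theorem apply_le (h : IsEwensSumLaw θ n q) (hθ : 0 < θ) (m : ℕ) :
    q m ≤ q 0 * (betaSeq θ m * (θ + m))⁻¹ := by
  have hfactor : 0 < betaSeq θ m * (θ + m) := mul_pos (betaSeq_pos hθ m) (by positivity)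
  have hsum : 0 ≤ ∑ j ∈ Finset.range (m - n), betaSeq θ (n + j) * q j :=
    Finset.sum_nonneg fun j _ => mul_nonneg (betaSeq_pos hθ _).le (h.nonneg j)
  rw [← div_eq_mul_inv, le_div_iff₀' hfactor, h.betaSeq_mul_apply_eq hθ]
  exact sub_le_self _ (mul_nonneg hθ.le hsum)

end IsEwensSumLaw

end Law

section LocalLimit

/-- `p` is the limiting density of the lattice laws `P n` on `ℕ` rescaled by `1 / n`, in the sense
of a local limit theorem. Only `p y` with `0 < y` is constrained, and the limit is taken along the
lattice points `⌊n y⌋` alone. -/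
def IsLimitDensity (P : ℕ → ℕ → ℝ) (p : ℝ → ℝ) : Prop :=
  ∀ y : ℝ, 0 < y → Tendsto (fun n : ℕ => n * P n ⌊n * y⌋₊) atTop (𝓝 (p y))

variable {θ : ℝ} {P : ℕ → ℕ → ℝ} {p : ℝ → ℝ}

theorem natFloor_natCast_mul_one_add (n : ℕ) {u : ℝ} (hu : 0 ≤ u) :
    ⌊n * (1 + u)⌋₊ = n + ⌊n * u⌋₊ := by
  rw [mul_one_add, add_comm, Nat.floor_add_natCast (by positivity), add_comm]

theorem tendsto_rpow_mul_exp_neg_harmonic (θ : ℝ) :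
    Tendsto (fun n : ℕ => (n : ℝ) ^ θ * Real.exp (-(θ * harmonic n))) atTop
      (𝓝 (Real.exp (-(Real.eulerMascheroniConstant * θ)))) := by
  refine ((Real.continuous_exp.tendsto _).comp
    (Real.tendsto_harmonic_sub_log.mul_const θ).neg).congr' ?_
  filter_upwards [eventually_gt_atTop 0] with n hn
  rw [Function.comp_apply, Real.rpow_def_of_pos (Nat.cast_pos.2 hn), ← Real.exp_add]
  ring_nf

theorem tendsto_rpow_mul_apply_zero (hP : ∀ᶠ n in atTop, IsEwensSumLaw θ n (P n)) :
    Tendsto (fun n : ℕ => (n : ℝ) ^ θ * P n 0) atTop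
      (𝓝 (Real.exp (-(Real.eulerMascheroniConstant * θ)))) := by
  refine (tendsto_rpow_mul_exp_neg_harmonic θ).congr' ?_
  filter_upwards [hP] with n hn
  rw [hn.apply_zero]

theorem exists_mul_apply_floor_le (hθ : 0 < θ) (hP : ∀ᶠ n in atTop, IsEwensSumLaw θ n (P n)) :
    ∃ C, ∀ᶠ n : ℕ in atTop, ∀ u : ℝ, 0 < u →
      n * P n ⌊n * u⌋₊ ≤ C * (u ^ (θ - 1) + (u + 1) ^ (θ - 1)) := by
  obtain ⟨B, hB, hbeta⟩ := exists_inv_betaSeq_mul_le hθ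
  obtain ⟨K, hK⟩ := (tendsto_rpow_mul_apply_zero hP).bddAbove_range
  refine ⟨K * B, ?_⟩
  filter_upwards [hP, eventually_ge_atTop 1] with n hn hn1 u hu
  have hn0 : (0 : ℝ) < n := Nat.cast_pos.2 hn1
  have hKn : (n : ℝ) ^ θ * P n 0 ≤ K := hK ⟨n, rfl⟩
  have hK0 : 0 ≤ K := le_trans (mul_nonneg (by positivity) (hn.nonneg 0)) hKn
  set v : ℝ := (⌊n * u⌋₊ + 1) / n with hv
  have hu_le : u ≤ v := (le_div_iff₀' hn0).2 (Nat.lt_floor_add_one _).le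
  have hle_u : v ≤ u + 1 := by
    rw [hv, div_le_iff₀' hn0, mul_add_one]
    exact add_le_add (Nat.floor_le (by positivity)) (by exact_mod_cast hn1)
  have hv0 : 0 < v := hu.trans_le hu_le
  have hrpow : v ^ (θ - 1) ≤ u ^ (θ - 1) + (u + 1) ^ (θ - 1) := by
    rcases le_total θ 1 with hθ1 | hθ1
    · exact (Real.rpow_le_rpow_of_nonpos hu hu_le (by linarith)).trans
        (le_add_of_nonneg_right (by positivity))
    · exact (Real.rpow_le_rpow hv0.le hle_u (by linarith)).trans
        (le_add_of_nonneg_left (by positivity))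
  calc n * P n ⌊n * u⌋₊
      ≤ n * (P n 0 * (B * ((⌊n * u⌋₊ : ℝ) + 1) ^ (θ - 1))) := by
        gcongr
        exact (hn.apply_le hθ _).trans (mul_le_mul_of_nonneg_left (hbeta _) (hn.nonneg 0))
    _ = n ^ θ * P n 0 * B * v ^ (θ - 1) := by
        rw [show (⌊n * u⌋₊ : ℝ) + 1 = n * v by rw [hv]; field_simp, Real.mul_rpow hn0.le hv0.le,
          Real.rpow_sub_one hn0.ne']
        field_simp
    _ ≤ K * B * (u ^ (θ - 1) + (u + 1) ^ (θ - 1)) := by gcongr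

theorem IsLimitDensity.tendsto_betaSeq_mul (hp : IsLimitDensity P p) (θ : ℝ) {y : ℝ} (hy : 0 < y) :
    Tendsto (fun n : ℕ =>
        (n : ℝ) ^ θ * (betaSeq θ ⌊n * y⌋₊ * (θ + ⌊n * y⌋₊) * P n ⌊n * y⌋₊)) atTop
      (𝓝 (Real.Gamma θ * y ^ (1 - θ) * p y)) := by
  have hfloor := tendsto_natFloor_natCast_mul_div hy.le
  have hlim := ((tendsto_rpow_mul_betaSeq θ hy hfloor).mul
    ((tendsto_const_div_atTop_nhds_zero_nat θ).add hfloor)).mul (hp y hy)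
  have hval : Real.Gamma θ * y ^ (-θ) * (0 + y) * p y = Real.Gamma θ * y ^ (1 - θ) * p y := by
    rw [sub_eq_neg_add, Real.rpow_add_one hy.ne']
    ring
  refine (hval ▸ hlim).congr' ?_
  filter_upwards [eventually_gt_atTop 0] with n hn
  have hn' : (n : ℝ) ≠ 0 := Nat.cast_ne_zero.2 hn.ne'
  field_simp

theorem IsLimitDensity.gamma_mul_rpow_mul_of_le_one (hp : IsLimitDensity P p) (hθ : 0 < θ)
    (hP : ∀ᶠ n in atTop, IsEwensSumLaw θ n (P n)) {y : ℝ} (hy : y ∈ Ioc (0 : ℝ) 1) :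
    Real.Gamma θ * y ^ (1 - θ) * p y = Real.exp (-(Real.eulerMascheroniConstant * θ)) := by
  refine tendsto_nhds_unique (hp.tendsto_betaSeq_mul θ hy.1)
    ((tendsto_rpow_mul_apply_zero hP).congr' ?_)
  filter_upwards [hP] with n hn
  have hle : ⌊n * y⌋₊ ≤ n := Nat.floor_le_of_le (mul_le_of_le_one_right n.cast_nonneg hy.2)
  simp [hn.betaSeq_mul_apply_eq hθ, Nat.sub_eq_zero_of_le hle]

theorem tendsto_rpow_mul_sum_betaSeq_mul (hp : IsLimitDensity P p) (hθ : 0 < θ)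
    (hP : ∀ᶠ n in atTop, IsEwensSumLaw θ n (P n)) {w : ℝ} (hw : 0 ≤ w) :
    Tendsto (fun n : ℕ =>
        (n : ℝ) ^ θ * ∑ j ∈ Finset.range ⌊n * w⌋₊, betaSeq θ (n + j) * P n j) atTop
      (𝓝 (∫ u in 0..w, Real.Gamma θ * (1 + u) ^ (-θ) * p u)) := by
  obtain ⟨C, hC⟩ := exists_mul_apply_floor_le hθ hP
  obtain ⟨M, hM⟩ := (Real.GammaSeq_tendsto_Gamma θ).bddAbove_range
  simp only [Finset.mul_sum]
  refine tendsto_sum_range_floor_of_dominated hw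
    (a := fun n j => (n : ℝ) ^ θ * (betaSeq θ (n + j) * P n j))
    (bound := fun u => M * (C * (u ^ (θ - 1) + (u + 1) ^ (θ - 1)))) ?_ ?_ fun u hu => ?_
  · have hpow (a b : ℝ) : IntervalIntegrable (fun u : ℝ => u ^ (θ - 1)) volume a b :=
      intervalIntegral.intervalIntegrable_rpow' (by linarith)
    have hpow_shift : IntervalIntegrable (fun u : ℝ => (u + 1) ^ (θ - 1)) volume 0 w := by
      simpa using (hpow 1 (w + 1)).comp_add_right 1
    exact (((hpow 0 w).add hpow_shift).const_mul C).const_mul M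
  · filter_upwards [hP, hC] with n hn hCn u hu
    have hM_n : (n : ℝ) ^ θ * betaSeq θ (n + ⌊n * u⌋₊) ≤ M :=
      (mul_le_mul_of_nonneg_left (betaSeq_antitone hθ (Nat.le_add_right n _))
        (by positivity)).trans (rpow_mul_betaSeq θ n ▸ hM ⟨n, rfl⟩)
    have hbeta := (betaSeq_pos hθ (n + ⌊n * u⌋₊)).le
    have hP_n := hn.nonneg ⌊n * u⌋₊
    rw [smul_eq_mul, Real.norm_of_nonneg (by positivity)]
    calc n * ((n : ℝ) ^ θ * (betaSeq θ (n + ⌊n * u⌋₊) * P n ⌊n * u⌋₊))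
        = (n : ℝ) ^ θ * betaSeq θ (n + ⌊n * u⌋₊) * (n * P n ⌊n * u⌋₊) := by ring
      _ ≤ _ := mul_le_mul hM_n (hCn u hu.1) (by positivity) (le_trans (by positivity) hM_n)
  · have hfloor := tendsto_natFloor_natCast_mul_div (add_nonneg zero_le_one hu.1.le)
    refine ((tendsto_rpow_mul_betaSeq θ (add_pos one_pos hu.1) hfloor).mul
      (hp u hu.1)).congr fun n => ?_
    rw [natFloor_natCast_mul_one_add n hu.1.le, smul_eq_mul]
    ring

theorem IsLimitDensity.gamma_mul_rpow_mul_one_add (hp : IsLimitDensity P p) (hθ : 0 < θ)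
    (hP : ∀ᶠ n in atTop, IsEwensSumLaw θ n (P n)) {w : ℝ} (hw : 0 ≤ w) :
    Real.Gamma θ * (1 + w) ^ (1 - θ) * p (1 + w) =
      Real.exp (-(Real.eulerMascheroniConstant * θ)) -
        θ * ∫ u in 0..w, Real.Gamma θ * (1 + u) ^ (-θ) * p u := by
  refine tendsto_nhds_unique (hp.tendsto_betaSeq_mul θ (by positivity))
    (((tendsto_rpow_mul_apply_zero hP).sub
      ((tendsto_rpow_mul_sum_betaSeq_mul hp hθ hP hw).const_mul θ)).congr' ?_)
  filter_upwards [hP] with n hn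
  rw [hn.betaSeq_mul_apply_eq hθ, natFloor_natCast_mul_one_add n hw, Nat.add_sub_cancel_left]
  ring

end LocalLimit

section LongestCycle

/-- The distribution function `F_θ` of Kingman's limiting longest cycle, expressed through the
limiting density `p` of `T_{0n} / n`. The paper uses the formula on `(0, 1]`; here it serves for
all `x > 0`, where by `longestCycleCDF_eq_one` it keeps the correct value `1` beyond `x = 1`. -/
noncomputable def longestCycleCDF (θ : ℝ) (p : ℝ → ℝ) (x : ℝ) : ℝ :=
  Real.exp (Real.eulerMascheroniConstant * θ) * x ^ (θ - 1) * Real.Gamma θ * p (1 / x)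

variable {θ : ℝ} {P : ℕ → ℕ → ℝ} {p : ℝ → ℝ}

theorem longestCycleCDF_one_div (θ : ℝ) (p : ℝ → ℝ) {y : ℝ} (hy : 0 ≤ y) :
    longestCycleCDF θ p (1 / y) = Real.exp (Real.eulerMascheroniConstant * θ) *
      (Real.Gamma θ * y ^ (1 - θ) * p y) := by
  rw [longestCycleCDF, one_div, Real.inv_rpow hy, ← Real.rpow_neg hy, neg_sub, one_div, inv_inv]
  ring

theorem longestCycleCDF_eq_one (hp : IsLimitDensity P p) (hθ : 0 < θ)
    (hP : ∀ᶠ n in atTop, IsEwensSumLaw θ n (P n)) {x : ℝ} (hx : 1 ≤ x) :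
    longestCycleCDF θ p x = 1 := by
  have hx0 : 0 < x := one_pos.trans_le hx
  have hinv : 1 / x ∈ Ioc (0 : ℝ) 1 := ⟨by positivity, (div_le_one hx0).2 hx⟩
  rw [← one_div_one_div x, longestCycleCDF_one_div θ p hinv.1.le,
    hp.gamma_mul_rpow_mul_of_le_one hθ hP hinv, ← Real.exp_add, add_neg_cancel, Real.exp_zero]

theorem integral_one_div_sub_one (g : ℝ → ℝ) {δ : ℝ} (hδ : δ ∈ Ioc (0 : ℝ) 1) :
    ∫ x in δ..1, g (1 / x - 1) / x ^ 2 = ∫ u in 0..1 / δ - 1, g u := by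
  have hpos {x : ℝ} (hx : x ∈ uIcc δ 1) : x ≠ 0 := by
    rw [uIcc_of_le hδ.2] at hx
    exact (hδ.1.trans_le hx.1).ne'
  have hderiv (x : ℝ) (hx : x ∈ Ioo (min δ 1) (max δ 1)) :
      HasDerivAt (fun x : ℝ => 1 / x - 1) (-(x ^ 2)⁻¹) x := by
    simpa [one_div] using (hasDerivAt_inv (hpos (Ioo_subset_Icc_self hx))).sub_const 1
  have hcont : ContinuousOn (fun x : ℝ => 1 / x - 1) (uIcc δ 1) :=
    (continuousOn_const.div continuousOn_id fun x hx => hpos hx).sub continuousOn_const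
  have hsubst := intervalIntegral.integral_comp_mul_deriv_of_deriv_nonpos (g := g) hcont hderiv
    fun x _ => neg_nonpos.2 (by positivity)
  rw [intervalIntegral.integral_symm (1 / δ - 1) 0]
  simpa [div_eq_mul_inv] using! congrArg Neg.neg hsubst

theorem longestCycleCDF_eq_one_sub_integral (hp : IsLimitDensity P p) (hθ : 0 < θ)
    (hP : ∀ᶠ n in atTop, IsEwensSumLaw θ n (P n)) {δ : ℝ} (hδ : δ ∈ Ioc (0 : ℝ) 1) :
    longestCycleCDF θ p δ =
      1 - θ * ∫ x in δ..1, (1 - x) ^ (θ - 1) * longestCycleCDF θ p (x / (1 - x)) / x := by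
  have hinv : 1 ≤ 1 / δ := (one_le_div hδ.1).2 hδ.2
  have hintegrand (x : ℝ) (hx : x ∈ Ioo δ 1) :
      (1 - x) ^ (θ - 1) * longestCycleCDF θ p (x / (1 - x)) / x =
        Real.exp (Real.eulerMascheroniConstant * θ) *
          (Real.Gamma θ * (1 + (1 / x - 1)) ^ (-θ) * p (1 / x - 1) / x ^ 2) := by
    have hx0 : 0 < x := hδ.1.trans hx.1
    have hx1 : 0 < 1 - x := sub_pos.2 hx.2
    have harg : 1 / (x / (1 - x)) = 1 / x - 1 := by field_simp
    rw [longestCycleCDF, harg, add_sub_cancel, one_div x, Real.inv_rpow hx0.le,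
      Real.rpow_neg hx0.le, inv_inv, Real.div_rpow hx0.le hx1.le, Real.rpow_sub_one hx0.ne']
    field_simp
  have hintegral :
      ∫ x in δ..1, (1 - x) ^ (θ - 1) * longestCycleCDF θ p (x / (1 - x)) / x =
        Real.exp (Real.eulerMascheroniConstant * θ) *
          ∫ u in 0..1 / δ - 1, Real.Gamma θ * (1 + u) ^ (-θ) * p u := by
    rw [← integral_one_div_sub_one _ hδ, ← intervalIntegral.integral_const_mul]
    exact intervalIntegral.integral_congr_Ioo_of_le hδ.2 hintegrand
  have hdensity := hp.gamma_mul_rpow_mul_one_add hθ hP (sub_nonneg.2 hinv)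
  rw [add_sub_cancel] at hdensity
  rw [← one_div_one_div δ, longestCycleCDF_one_div θ p (by positivity), hdensity, one_div_one_div,
    hintegral, mul_sub, ← Real.exp_add, add_neg_cancel, Real.exp_zero]
  ring

theorem Cdelta_identity_general (hp : IsLimitDensity P p) (hθ : 0 < θ)
    (hP : ∀ᶠ n in atTop, IsEwensSumLaw θ n (P n)) {PL : ℝ → ℝ}
    (hPL₁ : ∀ x ∈ Ioc (0 : ℝ) 1, PL x = longestCycleCDF θ p x) (hPL₂ : ∀ x, 1 ≤ x → PL x = 1)
    {δ : ℝ} (hδ : δ ∈ Ioc (0 : ℝ) 1) :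
    θ * ∫ x in δ..1, (1 - x) ^ (θ - 1) * PL (x / (1 - x)) / x = 1 - longestCycleCDF θ p δ := by
  have hPL (x : ℝ) (hx : 0 < x) : PL x = longestCycleCDF θ p x := by
    rcases le_total x 1 with hx1 | hx1
    · exact hPL₁ x ⟨hx, hx1⟩
    · rw [hPL₂ x hx1, longestCycleCDF_eq_one hp hθ hP hx1]
  rw [longestCycleCDF_eq_one_sub_integral hp hθ hP hδ, sub_sub_cancel]
  congr 1
  refine intervalIntegral.integral_congr_Ioo_of_le hδ.2 fun x hx => ?_
  rw [hPL _ (div_pos (hδ.1.trans hx.1) (sub_pos.2 hx.2))]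

end LongestCycle

/-- With `p_θ` the limiting density of `T_{0n}/n` for the Ewens model
(`T_{0n} = ∑ j Z_j`, `Z_j` independent Poisson(θ/j), characterized by the local limit
`n P(T_{0n} = r_n) → p_θ(y)` when `r_n/n → y`), and `P(L^{(∞)} ≤ x) = F_θ(x) =
e^{γθ} x^{θ-1} Γ(θ) p_θ(1/x)` on `(0,1]` (and `= 1` for `x ≥ 1`) the Kingman limiting
longest-cycle law, the constant
`C_δ = θ ∫_δ^1 (1−x)^{θ-1} P(L^{(∞)} ≤ x/(1−x)) dx/x` equals
`1 − Γ(θ) e^{γθ} δ^{θ-1} p_θ(1/δ)` for `0 < δ < 1`. -/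
theorem Cdelta_identity (θ : ℝ) (hθ : θ ∈ Set.Ioc (0 : ℝ) 1)
    (μT : ℕ → Measure ℕ) (hprob : ∀ n, IsProbabilityMeasure (μT n))
    (hpgf : ∀ n : ℕ, 1 ≤ n → ∀ z ∈ Set.Ioc (0 : ℝ) 1,
      ∑' k : ℕ, z ^ k * (μT n {k}).toReal
        = ∏ j ∈ Finset.Icc 1 n, Real.exp ((θ / j) * (z ^ j - 1)))
    (p : ℝ → ℝ)
    (hp : ∀ y : ℝ, 0 < y → ∀ r : ℕ → ℕ,
      Tendsto (fun n : ℕ => (r n : ℝ) / n) atTop (nhds y) →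
      Tendsto (fun n : ℕ => (n : ℝ) * (μT n {r n}).toReal) atTop (nhds (p y)))
    (PL : ℝ → ℝ)
    (hPL₁ : ∀ x ∈ Set.Ioc (0 : ℝ) 1,
      PL x = Real.exp (Real.eulerMascheroniConstant * θ) * x ^ (θ - 1) *
        Real.Gamma θ * p (1 / x))
    (hPL₂ : ∀ x : ℝ, 1 ≤ x → PL x = 1)
    (δ : ℝ) (hδ : δ ∈ Set.Ioo (0 : ℝ) 1) :
    θ * ∫ x in δ..1, (1 - x) ^ (θ - 1) * PL (x / (1 - x)) / x
      = 1 - Real.Gamma θ * Real.exp (Real.eulerMascheroniConstant * θ) *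
          δ ^ (θ - 1) * p (1 / δ) := by
  have hp_density : IsLimitDensity (fun n k => (μT n {k}).toReal) p := fun y hy =>
    hp y hy _ (tendsto_natFloor_natCast_mul_div hy.le)
  have hlaw : ∀ᶠ n in atTop, IsEwensSumLaw θ n fun k => (μT n {k}).toReal :=
    eventually_atTop.2 ⟨1, fun n hn => .of_measure (hpgf n hn)⟩
  rw [Cdelta_identity_general hp_density hθ.1 hlaw hPL₁ hPL₂ ⟨hδ.1, hδ.2.le⟩, longestCycleCDF]
  ring
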